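/- Let I=(G,ω,𝒫,≺) be a feasible HCPP(l) instance with classes E_1 ≺ … ≺ E_k, and let Γ be the layer graph constructed from I. Then the weight of an optimal solution to I equals the weight of a least-weight layer path in Γ. Moreover, every layer path in Γ has the form J=(v_1, y_2², y_3³, …, y_k^k, v_{k+1}) with y_i^i ∈ V_i for i∈{2,…,k}, and concatenating the corresponding walks P[v,y²,1], P[y²,y³,2], …, P[y^k,v,k] yields a feasible solution W_J for I with ω(W_J)=ω_Γ(J). -/

import Mathlib

namespace HCPPFormal

variable {V : Type} [DecidableEq V]

/-- The degree of a vertex in a multigraph given as a multiset of edges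
(loops count twice, multiplicities are counted). -/
def mDeg (M : Multiset (Sym2 V)) (v : V) : ℕ :=
  (M.map fun e => if e = Sym2.diag v then 2 else if v ∈ e then 1 else 0).sum

/-- The vertex set of the multigraph induced by a multiset of edges. -/
def mVerts (M : Multiset (Sym2 V)) : Set V := {v | ∃ e ∈ M, v ∈ e}

/-- Adjacency in the multigraph induced by a multiset of edges. -/
def mAdj (M : Multiset (Sym2 V)) (a b : V) : Prop := s(a, b) ∈ M

/-- The multigraph induced by a multiset of edges is connected. -/
def mConnected (M : Multiset (Sym2 V)) : Prop :=
  ∀ u ∈ mVerts M, ∀ v ∈ mVerts M, Relation.ReflTransGen (mAdj M) u v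

/-- The list of edges traversed by a walk, given as its list of vertices. -/
def walkEdgeList (w : List V) : List (Sym2 V) :=
  (w.zip w.tail).map fun p => s(p.1, p.2)

/-- The multiset of edges traversed by a walk (with multiplicities). -/
def walkEdges (w : List V) : Multiset (Sym2 V) :=
  (walkEdgeList w : Multiset (Sym2 V))

/-- The weight of a multiset of edges. -/
def mWeight (ω : Sym2 V → ℕ) (M : Multiset (Sym2 V)) : ℕ := (M.map ω).sum

/-- The weight of a walk. -/
def wWeight (ω : Sym2 V → ℕ) (w : List V) : ℕ := mWeight ω (walkEdges w)

/-- A multiset `M` of edges is a perfect matching on the vertex set `U`: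
it is a set of pairwise vertex-disjoint non-loop edges
whose endpoints are exactly the vertices of `U`. -/
def IsPerfectMatchingOn (M : Multiset (Sym2 V)) (U : Set V) : Prop :=
  M.Nodup ∧ (∀ e ∈ M, ¬ e.IsDiag) ∧
  (∀ e ∈ M, ∀ e' ∈ M, e ≠ e' → ∀ v : V, v ∈ e → v ∉ e') ∧
  mVerts M = U


/-- An HCPP(l) instance: an undirected graph on the vertex type `V` given by the
partition of its edge set into `k ≥ 1` nonempty classes `cls 0 ≺ cls 1 ≺ … ≺ cls (k-1)`,
linearly ordered by their indices. -/
structure HCPPl (V : Type) [DecidableEq V] : Type where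
  k : ℕ
  hk : 1 ≤ k
  cls : ℕ → Finset (Sym2 V)
  nonempty : ∀ i < k, (cls i).Nonempty
  disj : ∀ i < k, ∀ j < k, i ≠ j → Disjoint (cls i) (cls j)
  nodiag : ∀ i < k, ∀ e ∈ cls i, ¬ e.IsDiag

variable (I : HCPPl V)

/-- The edge set `E = E_1 ∪ … ∪ E_k` of the instance. -/
def edgesOf : Finset (Sym2 V) := (Finset.range I.k).biUnion I.cls

/-- The edge set `E_1 ∪ … ∪ E_{i+1}` of the first `i+1` classes (0-based index `i`). -/
def upTo (i : ℕ) : Finset (Sym2 V) := (Finset.range (i + 1)).biUnion I.cls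

/-- A feasible solution for the HCPP(l) instance `I`: a closed walk in `G`
traversing each edge at least once such that each edge of a class is traversed
only after all edges of all earlier classes have been traversed. -/
def Feasible (T : List V) : Prop :=
  T ≠ [] ∧ T.Chain' (fun a b => s(a, b) ∈ edgesOf I) ∧ T.head? = T.getLast? ∧
  (∀ e ∈ edgesOf I, e ∈ walkEdges T) ∧
  ∀ (q : ℕ) (hq : q < (walkEdgeList T).length) (i : ℕ), i < I.k →
    (walkEdgeList T).get ⟨q, hq⟩ ∈ I.cls i →
    ∀ j < i, ∀ e ∈ I.cls j,
      ∃ (p : ℕ) (hp : p < (walkEdgeList T).length),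
        p < q ∧ (walkEdgeList T).get ⟨p, hp⟩ = e

/-- A solution of the problem `R[u,v,i]`: a walk from `u` to `v` in
`⟨G⟩(E_1 ∪ … ∪ E_{i+1})` traversing all edges of the class `cls i` (0-based `i`). -/
def RSol (u v : V) (i : ℕ) (w : List V) : Prop :=
  w ≠ [] ∧ w.Chain' (fun a b => s(a, b) ∈ upTo I i) ∧
  w.head? = some u ∧ w.getLast? = some v ∧
  ∀ e ∈ I.cls i, e ∈ walkEdges w

/-- The problem `R[u,v,i]` has a solution. -/
def RFeas (u v : V) (i : ℕ) : Prop := ∃ w, RSol I u v i w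

/-- The optimal weight of a solution of `R[u,v,i]`,
i.e. the weight `ω(P[u,v,i])` of the arc `(u_i, v_{i+1})` of the layer graph `Γ`. -/
noncomputable def optR (ω : Sym2 V → ℕ) (u v : V) (i : ℕ) : ℕ :=
  sInf {c : ℕ | ∃ w, RSol I u v i w ∧ wWeight ω w = c}

/-- The vertices incident to the edges of `F`. -/
def vertsOf (F : Finset (Sym2 V)) : Set V := {v | ∃ e ∈ F, v ∈ e}

/-- A layer path in the layer graph `Γ`, encoded by the vertices `y 0, …, y I.k` of `G`
of which its vertices are copies: it leads from a vertex `v_1 ∈ V_1` to the copy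
`v_{k+1} ∈ V_{k+1}` of the same vertex of `V(E_1)`, its `i`-th vertex lies in the
layer `V_i`, and all its arcs are present in `Γ` (0-based layers `0, …, I.k`). -/
def IsLayerPath (y : ℕ → V) : Prop :=
  y 0 = y I.k ∧ y 0 ∈ vertsOf (I.cls 0) ∧
  (∀ i : ℕ, 0 < i → i < I.k →
    y i ∈ vertsOf (I.cls i) ∧ ∃ j < i, y i ∈ vertsOf (I.cls j)) ∧
  ∀ i < I.k, RFeas I (y i) (y (i + 1)) i

/-- The weight of a layer path in the layer graph `Γ`. -/
noncomputable def lpWeight (ω : Sym2 V → ℕ) (y : ℕ → V) : ℕ :=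
  ∑ i ∈ Finset.range I.k, optR I ω (y i) (y (i + 1)) i

/-- Concatenation of a list of walks, gluing the last vertex of each walk to the
(coinciding) first vertex of the next one. -/
def concatWalks : List (List V) → List V
  | [] => []
  | w :: ws => w ++ (concatWalks ws).tail

/-- The closed walk `W_J` obtained by concatenating the walks `P (y i) (y (i+1)) i`
along the layer path given by `y`. -/
def WJ (P : V → V → ℕ → List V) (y : ℕ → V) : List V :=
  concatWalks ((List.range I.k).map fun i => P (y i) (y (i + 1)) i)

section Helpers

variable {V : Type} [DecidableEq V]

lemma wel_nil : walkEdgeList ([] : List V) = [] := rfl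

lemma wel_single (a : V) : walkEdgeList [a] = [] := rfl

lemma wel_cons (a b : V) (l : List V) :
    walkEdgeList (a :: b :: l) = s(a, b) :: walkEdgeList (b :: l) := rfl

lemma wel_length (w : List V) : (walkEdgeList w).length = w.length - 1 := by
  simp [walkEdgeList]

lemma wel_getElem (w : List V) (p : ℕ) (hp : p < (walkEdgeList w).length) :
    (walkEdgeList w)[p] = s(w[p]'(by rw [wel_length] at hp; omega),
      w[p+1]'(by rw [wel_length] at hp; omega)) := by
  simp [walkEdgeList]

lemma wel_take (w : List V) (n : ℕ) :
    walkEdgeList (w.take (n + 1)) = (walkEdgeList w).take n := by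
  induction w generalizing n with
  | nil => simp [wel_nil]
  | cons a l ih =>
    cases l with
    | nil => simp [wel_single]
    | cons b l =>
      cases n with
      | zero => simp [wel_single]
      | succ n =>
        rw [wel_cons, List.take_succ_cons, List.take_succ_cons (as := walkEdgeList (b :: l)),
          ← ih n, List.take_succ_cons, wel_cons]

lemma wel_drop (w : List V) (n : ℕ) :
    walkEdgeList (w.drop n) = (walkEdgeList w).drop n := by
  induction w generalizing n with
  | nil => simp [wel_nil]
  | cons a l ih =>
    cases n with
    | zero => simp
    | succ n =>
      rw [List.drop_succ_cons, ih]
      cases l with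
      | nil => simp [wel_nil, wel_single]
      | cons b l => rw [wel_cons, List.drop_succ_cons]

lemma chain_iff (S : Finset (Sym2 V)) (w : List V) :
    w.Chain' (fun a b => s(a, b) ∈ S) ↔ ∀ e ∈ walkEdgeList w, e ∈ S := by
  induction w with
  | nil => simp [wel_nil, List.Chain']
  | cons a l ih =>
    cases l with
    | nil => simp [wel_single, List.Chain']
    | cons b l =>
      rw [wel_cons, List.forall_mem_cons, ← ih]
      simp [List.Chain']

lemma wel_append (a b : List V) (u : V) (ha : a.getLast? = some u) (hb : b.head? = some u) :
    walkEdgeList (a ++ b.tail) = walkEdgeList a ++ walkEdgeList b := by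
  induction a with
  | nil => simp at ha
  | cons x l ih =>
    cases l with
    | nil =>
      cases b with
      | nil => simp at hb
      | cons y b =>
        simp at ha hb
        subst ha; subst hb
        simp [wel_single]
    | cons y l =>
      have := ih (by simpa using ha)
      rw [List.cons_append, List.cons_append, wel_cons, wel_cons, List.cons_append, ← this,
        List.cons_append]

lemma concat_spec (f : ℕ → List V) (y : ℕ → V) (n a : ℕ)
    (h : ∀ i, a ≤ i → i < a + (n + 1) →
      (f i).head? = some (y i) ∧ (f i).getLast? = some (y (i + 1))) :
    (concatWalks ((List.range' a (n + 1)).map f)).head? = some (y a) ∧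
    (concatWalks ((List.range' a (n + 1)).map f)).getLast? = some (y (a + (n + 1))) ∧
    walkEdgeList (concatWalks ((List.range' a (n + 1)).map f)) =
      (List.range' a (n + 1)).flatMap (fun i => walkEdgeList (f i)) := by
  induction n generalizing a with
  | zero =>
    have := h a le_rfl (by omega)
    simpa [concatWalks] using this
  | succ n ih =>
    obtain ⟨h1, h2, h3⟩ := ih (a + 1) (fun i hi hi' => h i (by omega) (by omega))
    obtain ⟨g1, g2⟩ := h a le_rfl (by omega)
    rw [List.range'_succ, List.map_cons, concatWalks, List.flatMap_cons, ← h3]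
    set C := concatWalks ((List.range' (a + 1) (n + 1)).map f) with hC
    refine ⟨?_, ?_, wel_append _ _ _ g2 h1⟩
    · rw [List.head?_append, g1]; rfl
    · rw [List.getLast?_append]
      have e : a + 1 + (n + 1) = a + (n + 1 + 1) := by omega
      rw [e] at h2
      rcases hc : C with _ | ⟨c, _ | ⟨d, C'⟩⟩
      · simp [hc] at h2
      · simp [hc] at h2 h1
        simp [g2, ← h1, h2]
      · rw [hc] at h2
        simp only [List.tail_cons]
        rw [List.getLast?_cons_cons] at h2
        rw [h2]; rfl

lemma wWeight_eq (ω : Sym2 V → ℕ) (w : List V) :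
    wWeight ω w = ((walkEdgeList w).map ω).sum := by
  simp [wWeight, mWeight, walkEdges]

lemma sum_flatMap_range (ω : Sym2 V → ℕ) (g : ℕ → List (Sym2 V)) (n : ℕ) :
    (((List.range n).flatMap g).map ω).sum = ∑ i ∈ Finset.range n, ((g i).map ω).sum := by
  induction n with
  | zero => simp
  | succ n ih =>
    rw [List.range_succ, List.flatMap_append, List.map_append, List.sum_append, ih,
      Finset.sum_range_succ]
    simp

lemma mem_upTo (I : HCPPl V) (i : ℕ) (e : Sym2 V) :
    e ∈ upTo I i ↔ ∃ j ≤ i, e ∈ I.cls j := by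
  simp [upTo, Nat.lt_succ_iff]

lemma mem_edgesOf (I : HCPPl V) (e : Sym2 V) :
    e ∈ edgesOf I ↔ ∃ j < I.k, e ∈ I.cls j := by
  simp [edgesOf]

lemma cls_unique (I : HCPPl V) {i j : ℕ} (hi : i < I.k) (hj : j < I.k) {e : Sym2 V}
    (h : e ∈ I.cls i) (h' : e ∈ I.cls j) : i = j := by
  by_contra hne
  exact Finset.disjoint_left.1 (I.disj i hi j hj hne) h h'

lemma part2 (I : HCPPl V) (ω : Sym2 V → ℕ) (P : V → V → ℕ → List V)
    (hP : ∀ (u v : V) (i : ℕ), i < I.k → RFeas I u v i →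
      RSol I u v i (P u v i) ∧ wWeight ω (P u v i) = optR I ω u v i)
    (y : ℕ → V) (hy : IsLayerPath I y) :
    Feasible I (WJ I P y) ∧ wWeight ω (WJ I P y) = lpWeight I ω y := by
  obtain ⟨h0, -, -, hR⟩ := hy
  obtain ⟨n, hn⟩ : ∃ n, I.k = n + 1 := ⟨I.k - 1, by have := I.hk; omega⟩
  have hS : ∀ i < I.k, RSol I (y i) (y (i+1)) i (P (y i) (y (i+1)) i) := fun i hi =>
    (hP _ _ i hi (hR i hi)).1
  obtain ⟨c1, c2, c3⟩ := concat_spec (fun i => P (y i) (y (i + 1)) i) y n 0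
    (fun i _ hi => ⟨(hS i (by omega)).2.2.1, (hS i (by omega)).2.2.2.1⟩)
  rw [← List.range_eq_range', ← hn] at c1 c2 c3
  rw [Nat.zero_add] at c2
  change (WJ I P y).head? = _ at c1
  change (WJ I P y).getLast? = _ at c2
  change walkEdgeList (WJ I P y) = _ at c3
  set g : ℕ → List (Sym2 V) := fun i => walkEdgeList (P (y i) (y (i + 1)) i) with hg
  have hgU : ∀ i < I.k, ∀ e ∈ g i, ∃ j ≤ i, e ∈ I.cls j := fun i hi e he =>
    (mem_upTo I i e).1 ((chain_iff _ _).1 (hS i hi).2.1 e he)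
  have hgC : ∀ i < I.k, ∀ e ∈ I.cls i, e ∈ g i := fun i hi e he => by
    simpa [walkEdges] using (hS i hi).2.2.2.2 e he
  refine ⟨⟨?_, ?_, ?_, ?_, ?_⟩, ?_⟩
  · intro h; simp [h] at c1
  · rw [chain_iff, c3]
    intro e he
    obtain ⟨i, hi, he⟩ := List.mem_flatMap.1 he
    rw [List.mem_range] at hi
    obtain ⟨j, hj, he⟩ := hgU i hi e he
    exact (mem_edgesOf I e).2 ⟨j, by omega, he⟩
  · rw [c1, c2, h0]
  · intro e he
    obtain ⟨i, hi, he⟩ := (mem_edgesOf I e).1 he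
    have : e ∈ walkEdgeList (WJ I P y) := by
      rw [c3]
      exact List.mem_flatMap.2 ⟨i, List.mem_range.2 hi, hgC i hi e he⟩
    simpa [walkEdges] using this
  · intro q hq i hi hqi j hj e he
    have hsplit : walkEdgeList (WJ I P y) = (List.range i).flatMap g ++
        (List.range' i (I.k - i)).flatMap g := by
      rw [c3, ← List.flatMap_append]
      congr 1
      rw [List.range_eq_range', List.range_eq_range']
      have := List.range'_append_1 (s := 0) (m := i) (n := I.k - i)
      rw [Nat.zero_add, Nat.add_sub_cancel' hi.le] at this
      exact this.symm
    have hmem : e ∈ (List.range i).flatMap g :=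
      List.mem_flatMap.2 ⟨j, List.mem_range.2 hj, hgC j (by omega) e he⟩
    obtain ⟨p, hp, hpe⟩ := List.mem_iff_getElem.1 hmem
    have hlen : ((List.range i).flatMap g).length ≤ q := by
      by_contra hlt
      push Not at hlt
      have hm : (walkEdgeList (WJ I P y)).get ⟨q, hq⟩ ∈ (List.range i).flatMap g := by
        have : (walkEdgeList (WJ I P y)).get ⟨q, hq⟩ = ((List.range i).flatMap g)[q] := by
          simp only [List.get_eq_getElem, hsplit]
          exact List.getElem_append_left hlt
        rw [this]; exact List.getElem_mem _
      obtain ⟨m, hm, hm'⟩ := List.mem_flatMap.1 hm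
      rw [List.mem_range] at hm
      obtain ⟨j', hj', hc⟩ := hgU m (by omega) _ hm'
      have := cls_unique I hi (by omega) hqi hc
      omega
    refine ⟨p, by omega, by omega, ?_⟩
    simp only [List.get_eq_getElem, hsplit]
    rw [List.getElem_append_left hp, hpe]
  · rw [wWeight_eq, c3, sum_flatMap_range, lpWeight]
    refine Finset.sum_congr rfl fun i hi => ?_
    rw [← (hP _ _ i (Finset.mem_range.1 hi) (hR i (Finset.mem_range.1 hi))).2, wWeight_eq]

lemma exists_cut (I : HCPPl V) (T : List V) (hT : Feasible I T) :
    ∃ Q : ℕ → ℕ, Q 0 = 0 ∧ Q I.k = (walkEdgeList T).length ∧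
      (∀ i < I.k, ∃ h : Q i < (walkEdgeList T).length, (walkEdgeList T)[Q i] ∈ I.cls i) ∧
      (∀ i < I.k, Q i < Q (i + 1)) ∧
      (∀ i < I.k, ∀ p (hp : p < (walkEdgeList T).length),
        p < Q (i + 1) → (walkEdgeList T)[p] ∈ upTo I i) ∧
      (∀ i < I.k, ∀ e ∈ I.cls i, ∃ p, ∃ hp : p < (walkEdgeList T).length,
        Q i ≤ p ∧ p < Q (i + 1) ∧ (walkEdgeList T)[p] = e) := by
  obtain ⟨-, hch, -, hcov, hord⟩ := hT
  rw [chain_iff] at hch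
  set L := walkEdgeList T with hL
  have hcov' : ∀ i < I.k, ∀ e ∈ I.cls i, e ∈ L := fun i hi e he => by
    simpa [walkEdges] using hcov e ((mem_edgesOf I e).2 ⟨i, hi, he⟩)
  set F : ℕ → ℕ := fun i => L.findIdx (fun e => decide (e ∈ I.cls i)) with hF
  have hFlt : ∀ i < I.k, F i < L.length := fun i hi => by
    obtain ⟨e, he⟩ := I.nonempty i hi
    exact List.findIdx_lt_length_of_exists ⟨e, hcov' i hi e he, by simpa using he⟩
  have hFmem : ∀ i (h : F i < L.length), L[F i] ∈ I.cls i := fun i h => by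
    have := List.findIdx_getElem (xs := L) (p := fun e => decide (e ∈ I.cls i)) (w := h)
    simpa using this
  have hFle : ∀ i p (hp : p < L.length), L[p] ∈ I.cls i → F i ≤ p := fun i p hp hm => by
    by_contra hlt
    push Not at hlt
    have := List.not_of_lt_findIdx (xs := L) (p := fun e => decide (e ∈ I.cls i)) hlt
    simp at this
    exact this hm
  set Q : ℕ → ℕ := fun i => if i < I.k then F i else L.length with hQ
  have hQ1 : ∀ i, i < I.k → Q i = F i := fun i hi => by simp [hQ, hi]
  have hQ2 : ∀ i, ¬ i < I.k → Q i = L.length := fun i hi => by simp [hQ, hi]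
  -- edges of class j strictly before first edge of class i
  have hbef : ∀ i < I.k, ∀ j < i, ∀ e ∈ I.cls j, ∃ p, ∃ hp : p < L.length,
      p < F i ∧ L[p] = e := fun i hi j hj e he => by
    obtain ⟨p, hp, h1, h2⟩ := hord (F i) (hFlt i hi) i hi (hFmem i (hFlt i hi)) j hj e he
    exact ⟨p, hp, h1, h2⟩
  have hFmono : ∀ i < I.k, ∀ j < i, F j < F i := fun i hi j hj => by
    obtain ⟨e, he⟩ := I.nonempty j (by omega)
    obtain ⟨p, hp, h1, h2⟩ := hbef i hi j hj e he
    have := hFle j p hp (by rw [h2]; exact he)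
    omega
  refine ⟨Q, ?_, hQ2 _ (lt_irrefl _), ?_, ?_, ?_, ?_⟩
  · have hk := I.hk
    rw [hQ1 0 (by omega)]
    have hpos : 0 < L.length := by have := hFlt 0 (by omega); omega
    obtain ⟨j, hj, hm⟩ := (mem_edgesOf I _).1 (hch L[0] (List.getElem_mem _))
    have h1 := hFle j 0 hpos hm
    rcases Nat.eq_zero_or_pos j with rfl | hj0
    · omega
    · have := hFmono j hj 0 hj0
      omega
  · intro i hi
    refine ⟨by rw [hQ1 i hi]; exact hFlt i hi, ?_⟩
    simp only [hQ1 i hi]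
    exact hFmem i (hFlt i hi)
  · intro i hi
    rw [hQ1 i hi]
    by_cases h : i + 1 < I.k
    · rw [hQ1 _ h]; exact hFmono _ h _ (by omega)
    · rw [hQ2 _ h]; exact hFlt i hi
  · intro i hi p hp hlt
    obtain ⟨j, hj, hm⟩ := (mem_edgesOf I _).1 (hch L[p] (List.getElem_mem _))
    refine (mem_upTo I i _).2 ⟨j, ?_, hm⟩
    by_contra hij
    push Not at hij
    have h1 := hFle j p hp hm
    rw [hQ1 (i+1) (by omega)] at hlt
    rcases Nat.lt_or_ge (i + 1) j with h | h
    · have := hFmono j hj _ h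
      omega
    · obtain rfl : j = i + 1 := by omega
      omega
  · intro i hi e he
    rw [hQ1 i hi]
    by_cases h : i + 1 < I.k
    · rw [hQ1 _ h]
      obtain ⟨p, hp, h1, h2⟩ := hbef (i+1) h i (by omega) e he
      exact ⟨p, hp, hFle i p hp (by rw [h2]; exact he), h1, h2⟩
    · rw [hQ2 _ h]
      obtain ⟨p, hp, h2⟩ := List.mem_iff_getElem.1 (hcov' i hi e he)
      exact ⟨p, hp, hFle i p hp (by rw [h2]; exact he), hp, h2⟩

lemma sum_segments (ω : Sym2 V → ℕ) (L : List (Sym2 V)) (Q : ℕ → ℕ) (h0 : Q 0 = 0) (n : ℕ)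
    (hm : ∀ i < n, Q i < Q (i + 1)) :
    ∑ i ∈ Finset.range n, (((L.take (Q (i + 1))).drop (Q i)).map ω).sum =
      ((L.take (Q n)).map ω).sum := by
  induction n with
  | zero => simp [h0]
  | succ n ih =>
    rw [Finset.sum_range_succ, ih (fun i hi => hm i (by omega))]
    have hlt := hm n (by omega)
    have h1 : L.take (Q n) = (L.take (Q (n+1))).take (Q n) := by
      rw [List.take_take, min_eq_left hlt.le]
    rw [h1, ← List.sum_append, ← List.map_append, List.take_append_drop]

lemma part1 (I : HCPPl V) (ω : Sym2 V → ℕ) (T : List V) (hT : Feasible I T) :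
    ∃ y, IsLayerPath I y ∧ lpWeight I ω y ≤ wWeight ω T := by
  obtain ⟨Q, q0, qk, qmem, qlt, qup, qcov⟩ := exists_cut I T hT
  obtain ⟨hne, -, hcl, -, -⟩ := hT
  have hk := I.hk
  have hlen : T.length = (walkEdgeList T).length + 1 := by
    rw [wel_length]
    have := List.length_pos_of_ne_nil hne
    omega
  have hQle : ∀ i ≤ I.k, Q i < T.length := fun i hi => by
    rcases Nat.lt_or_ge i I.k with h | h
    · obtain ⟨h, -⟩ := qmem i h; omega
    · obtain rfl : i = I.k := by omega
      omega
  set y : ℕ → V := fun i => (T[Q i]?).getD (T.head hne) with hy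
  have hyT : ∀ i (hi : i ≤ I.k), T[Q i]'(hQle i hi) = y i := fun i hi => by
    simp [hy, List.getElem?_eq_getElem (hQle i hi)]
  have hyT' : ∀ i (hi : i ≤ I.k), T[Q i]? = some (y i) := fun i hi => by
    rw [List.getElem?_eq_getElem (hQle i hi), hyT i hi]
  have hver : ∀ i < I.k, y i ∈ vertsOf (I.cls i) := fun i hi => by
    obtain ⟨h, hm⟩ := qmem i hi
    refine ⟨_, hm, ?_⟩
    rw [wel_getElem, ← hyT i hi.le]
    exact Sym2.mem_mk_left _ _
  set seg : ℕ → List V := fun i => (T.take (Q (i + 1) + 1)).drop (Q i) with hseg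
  have hsegE : ∀ i, walkEdgeList (seg i) = ((walkEdgeList T).take (Q (i + 1))).drop (Q i) :=
    fun i => by rw [hseg, wel_drop, wel_take]
  have hsol : ∀ i < I.k, RSol I (y i) (y (i + 1)) i (seg i) := fun i hi => by
    have hlt := qlt i hi
    have hb := hQle (i + 1) (by omega)
    have hlenS : (seg i).length = Q (i + 1) + 1 - Q i := by
      simp [hseg]; omega
    have hhead : (seg i).head? = some (y i) := by
      rw [List.head?_eq_getElem?, ← hyT' i hi.le]
      simp only [hseg, List.getElem?_drop, List.getElem?_take]
      simp; omega
    refine ⟨?_, ?_, hhead, ?_, ?_⟩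
    · intro h; simp [h] at hhead
    · rw [chain_iff, hsegE]
      intro e he
      obtain ⟨p, hp, rfl⟩ := List.mem_iff_getElem.1 he
      simp only [List.length_drop, List.length_take] at hp
      rw [List.getElem_drop, List.getElem_take]
      exact qup i hi _ _ (by omega)
    · rw [List.getLast?_eq_getElem?, hlenS, ← hyT' (i + 1) (by omega)]
      simp only [hseg, List.getElem?_drop, List.getElem?_take]
      have : Q i + (Q (i + 1) + 1 - Q i - 1) = Q (i + 1) := by omega
      rw [this]; simp
    · intro e he
      obtain ⟨p, hp, h1, h2, h3⟩ := qcov i hi e he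
      have : e ∈ walkEdgeList (seg i) := by
        rw [hsegE, List.mem_iff_getElem]
        refine ⟨p - Q i, ?_, ?_⟩
        · simp only [List.length_drop, List.length_take]; omega
        · rw [List.getElem_drop, List.getElem_take, ← h3]
          congr 1; omega
      simpa [walkEdges] using this
  refine ⟨y, ⟨?_, hver 0 (by omega), ?_, fun i hi => ⟨_, hsol i hi⟩⟩, ?_⟩
  · have e0 := hyT' 0 (by omega)
    have ek := hyT' I.k le_rfl
    rw [q0, ← List.head?_eq_getElem?, hcl, List.getLast?_eq_getElem?] at e0
    rw [qk, wel_length, e0] at ek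
    exact Option.some.inj ek
  · intro i hi0 hi
    refine ⟨hver i hi, ?_⟩
    obtain ⟨i', rfl⟩ : ∃ i', i = i' + 1 := ⟨i - 1, by omega⟩
    have hlt := qlt i' (by omega)
    have hb := hQle (i' + 1) (by omega)
    obtain ⟨j, hj, hm⟩ := (mem_upTo I i' _).1
      (qup i' (by omega) (Q (i' + 1) - 1) (by omega) (by omega))
    refine ⟨j, by omega, _, hm, ?_⟩
    rw [wel_getElem, ← hyT (i' + 1) hi.le]
    have : Q (i' + 1) - 1 + 1 = Q (i' + 1) := by omega
    simp only [this]
    exact Sym2.mem_mk_right _ _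
  · calc lpWeight I ω y ≤ ∑ i ∈ Finset.range I.k, wWeight ω (seg i) :=
          Finset.sum_le_sum fun i hi => Nat.sInf_le ⟨_, hsol i (Finset.mem_range.1 hi), rfl⟩
      _ = wWeight ω T := by
          simp only [wWeight_eq, hsegE]
          rw [sum_segments ω _ Q q0 I.k qlt, qk, List.take_length]

end Helpers

/-- Let `I` be a feasible HCPP(l) instance with classes `E_1 ≺ … ≺ E_k` and let `Γ` be the
layer graph constructed from `I` (whose arc `(u_i, v_{i+1})` has weight `ω(P[u,v,i])`,
where `P[u,v,i]` is an arbitrary fixed optimal solution of `R[u,v,i]`). Then the weight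
of an optimal solution to `I` equals the weight of a least-weight layer path in `Γ`.
Moreover, every layer path in `Γ` has the form `J = (v_1, y_2², …, y_k^k, v_{k+1})`
(which is encoded in `IsLayerPath`), and concatenating the corresponding walks
`P[v,y²,1], P[y²,y³,2], …, P[y^k,v,k]` yields a feasible solution `W_J` for `I`
with `ω(W_J) = ω_Γ(J)`. -/
theorem layer_graph_correct {V : Type} [DecidableEq V] (I : HCPPl V) (ω : Sym2 V → ℕ)
    (hfeas : ∃ T : List V, Feasible I T)
    (P : V → V → ℕ → List V)
    (hP : ∀ (u v : V) (i : ℕ), i < I.k → RFeas I u v i →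
      RSol I u v i (P u v i) ∧ wWeight ω (P u v i) = optR I ω u v i) :
    (sInf {c : ℕ | ∃ T : List V, Feasible I T ∧ wWeight ω T = c} =
      sInf {c : ℕ | ∃ y : ℕ → V, IsLayerPath I y ∧ lpWeight I ω y = c}) ∧
    ∀ y : ℕ → V, IsLayerPath I y →
      Feasible I (WJ I P y) ∧ wWeight ω (WJ I P y) = lpWeight I ω y := by
  have h2 := part2 I ω P hP
  refine ⟨?_, h2⟩
  obtain ⟨T0, hT0⟩ := hfeas
  obtain ⟨y0, hy0, -⟩ := part1 I ω T0 hT0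
  apply le_antisymm
  · obtain ⟨y, hy, hw⟩ := Nat.sInf_mem
      (s := {c : ℕ | ∃ y : ℕ → V, IsLayerPath I y ∧ lpWeight I ω y = c}) ⟨_, y0, hy0, rfl⟩
    rw [← hw]
    exact Nat.sInf_le ⟨_, (h2 y hy).1, (h2 y hy).2⟩
  · obtain ⟨T, hT, hw⟩ := Nat.sInf_mem
      (s := {c : ℕ | ∃ T : List V, Feasible I T ∧ wWeight ω T = c}) ⟨_, T0, hT0, rfl⟩
    obtain ⟨y, hy, hle⟩ := part1 I ω T hT
    rw [← hw]
    exact le_trans (Nat.sInf_le ⟨y, hy, rfl⟩) hle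

end HCPPFormal
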